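/- arXiv:1606.09389 — 2 statements merged into one kernel-verified Lean document; each statement's English description precedes it below -/
import Mathlib

section
/- Let r ≥ 2 be an integer and let G be a finite (2r−2, 2r)-biregular graph. Then G has a cyclic interval 2r-coloring, and the least t for which G has a cyclic interval t-coloring equals 2r. -/
open SimpleGraph

/-- The set of colors appearing on edges incident to `v` under the edge coloring `c`. -/
def colorsAt {V : Type*} (G : SimpleGraph V) (c : Sym2 V → ℕ) (v : V) : Set ℕ :=
  c '' (G.incidenceSet v)

/-- A set of natural numbers is an interval of consecutive integers. -/
def IsIntervalSet (S : Set ℕ) : Prop := ∃ a b : ℕ, S = Set.Icc a b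

/-- A proper edge coloring of `G` with colors `1, …, t`: every edge gets a color in
`{1, …, t}` and distinct edges sharing a vertex get distinct colors. -/
def IsProperEdgeColoring {V : Type*} (G : SimpleGraph V) (t : ℕ) (c : Sym2 V → ℕ) : Prop :=
  (∀ e ∈ G.edgeSet, c e ∈ Set.Icc 1 t) ∧
  ∀ e₁ ∈ G.edgeSet, ∀ e₂ ∈ G.edgeSet, e₁ ≠ e₂ → (∃ v, v ∈ e₁ ∧ v ∈ e₂) → c e₁ ≠ c e₂

/-- A cyclic interval `t`-coloring of `G`: a proper edge coloring with colors `1, …, t`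
such that at every vertex the set of incident colors, or its complement in `{1, …, t}`,
is an interval of consecutive integers. -/
def IsCyclicIntervalColoring {V : Type*} (G : SimpleGraph V) (t : ℕ) (c : Sym2 V → ℕ) : Prop :=
  IsProperEdgeColoring G t c ∧
  ∀ v : V, IsIntervalSet (colorsAt G c v) ∨ IsIntervalSet (Set.Icc 1 t \ colorsAt G c v)

/-- An `(a,b)`-biregular graph: the vertex set is partitioned into two nonempty
independent parts `X` and `Xᶜ`, every edge joins the parts, every vertex of `X`
has degree `a`, and every vertex of `Xᶜ` has degree `b`. -/
def IsBiregular {V : Type*} [Fintype V] (G : SimpleGraph V) [DecidableRel G.Adj]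
    (a b : ℕ) : Prop :=
  ∃ X : Set V, X.Nonempty ∧ Xᶜ.Nonempty ∧
    (∀ u v : V, G.Adj u v → (u ∈ X ↔ v ∉ X)) ∧
    (∀ v ∈ X, G.degree v = a) ∧ (∀ v ∈ Xᶜ, G.degree v = b)

theorem card_fibers_aux {E A : Type*} [DecidableEq A] (F : Finset E) (s : E → A)
    (S : Finset A) (n : ℕ) (h : ∀ a ∈ S, (F.filter (fun e => s e = a)).card = n) :
    (F.filter (fun e => s e ∈ S)).card = S.card * n := by
  have hm : Set.MapsTo s (F.filter (fun e => s e ∈ S) : Finset E) (S : Set A) := by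
    intro e he
    simp at he
    exact he.2
  rw [Finset.card_eq_sum_card_fiberwise hm]
  apply Finset.sum_const_nat
  intro a ha
  rw [← h a ha, Finset.filter_filter]
  congr 1
  ext e
  simp only [Finset.mem_filter]
  constructor
  · rintro ⟨h1, _, h2⟩
    exact ⟨h1, h2⟩
  · rintro ⟨h1, h2⟩
    exact ⟨h1, h2 ▸ ha, h2⟩

theorem fiber_sdiff_aux {E A : Type*} [DecidableEq E] [DecidableEq A] (F M : Finset E)
    (s : E → A) (d : ℕ) (hMF : M ⊆ F)
    (hinj : ∀ e ∈ M, ∀ e' ∈ M, s e = s e' → e = e')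
    (hsur : ∀ e ∈ F, ∃ m ∈ M, s m = s e)
    (hs : ∀ e ∈ F, (F.filter (fun e' => s e' = s e)).card = d + 1) :
    ∀ e ∈ F \ M, ((F \ M).filter (fun e' => s e' = s e)).card = d := by
  intro e he
  have heF := (Finset.mem_sdiff.1 he).1
  obtain ⟨m, hm, hme⟩ := hsur e heF
  have : (F \ M).filter (fun e' => s e' = s e) =
      (F.filter (fun e' => s e' = s e)).erase m := by
    ext x
    simp only [Finset.mem_filter, Finset.mem_sdiff, Finset.mem_erase]
    constructor
    · rintro ⟨⟨h1, h2⟩, h3⟩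
      exact ⟨fun h => h2 (h ▸ hm), h1, h3⟩
    · rintro ⟨h1, h2, h3⟩
      exact ⟨⟨h2, fun h => h1 (hinj x h m hm (h3.trans hme.symm))⟩, h3⟩
  rw [this, Finset.card_erase_of_mem (by simp [hMF hm, hme]), hs e heF]
  rfl

/-- König's edge colouring theorem for regular bipartite multigraphs. -/
theorem konig_aux {E A B : Type*} [DecidableEq E] [DecidableEq A] [DecidableEq B]
    (s : E → A) (t : E → B) (d : ℕ) : ∀ (F : Finset E)
    (_ : ∀ e ∈ F, (F.filter (fun e' => s e' = s e)).card = d)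
    (_ : ∀ e ∈ F, (F.filter (fun e' => t e' = t e)).card = d),
    ∃ c : E → ℕ, (∀ e ∈ F, c e < d) ∧
      (∀ e ∈ F, ∀ e' ∈ F, s e = s e' → c e = c e' → e = e') ∧
      (∀ e ∈ F, ∀ e' ∈ F, t e = t e' → c e = c e' → e = e') := by
  induction d with
  | zero =>
    intro F hs _
    have hF : ∀ e, e ∉ F := by
      intro e he
      have := hs e he
      rw [Finset.card_eq_zero] at this
      have h2 : e ∈ F.filter (fun e' => s e' = s e) := by simp [he]
      rw [this] at h2
      simp at h2
    exact ⟨fun _ => 0, fun e he => absurd he (hF e), fun e he => absurd he (hF e),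
      fun e he => absurd he (hF e)⟩
  | succ d ih =>
    intro F hs ht
    have hsA : ∀ a ∈ F.image s, (F.filter (fun e => s e = a)).card = d + 1 := by
      intro a ha
      obtain ⟨e, he, rfl⟩ := Finset.mem_image.1 ha
      exact hs e he
    have htB : ∀ b ∈ F.image t, (F.filter (fun e => t e = b)).card = d + 1 := by
      intro a ha
      obtain ⟨e, he, rfl⟩ := Finset.mem_image.1 ha
      exact ht e he
    have hall : ∃ f : {a // a ∈ F.image s} → B, Function.Injective f ∧
        ∀ a, f a ∈ (F.filter (fun e => s e = a.1)).image t := by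
      rw [← Finset.all_card_le_biUnion_card_iff_exists_injective
        (fun a : {a // a ∈ F.image s} => (F.filter (fun e => s e = a.1)).image t)]
      intro S
      set N := S.biUnion (fun a : {a // a ∈ F.image s} =>
        (F.filter (fun e => s e = a.1)).image t) with hN
      have hNB : N ⊆ F.image t := by
        intro b hb
        simp only [hN, Finset.mem_biUnion, Finset.mem_image, Finset.mem_filter] at hb ⊢
        obtain ⟨a, _, e, he, rfl⟩ := hb
        exact ⟨e, he.1, rfl⟩
      have h1 := card_fibers_aux F s (S.image Subtype.val) (d + 1) (by
        intro a ha
        obtain ⟨a, _, rfl⟩ := Finset.mem_image.1 ha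
        exact hsA a.1 a.2)
      have h2 := card_fibers_aux F t N (d + 1) (fun b hb => htB b (hNB hb))
      have h3 : (F.filter (fun e => s e ∈ S.image Subtype.val)) ⊆
          (F.filter (fun e => t e ∈ N)) := by
        intro e he
        rw [Finset.mem_filter, Finset.mem_image] at he
        obtain ⟨heF, a, ha, hae⟩ := he
        rw [Finset.mem_filter]
        refine ⟨heF, ?_⟩
        rw [hN, Finset.mem_biUnion]
        exact ⟨a, ha, Finset.mem_image.2 ⟨e, Finset.mem_filter.2 ⟨heF, hae.symm⟩, rfl⟩⟩
      have h4 := Finset.card_le_card h3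
      rw [h1, h2, Finset.card_image_of_injective _ Subtype.val_injective] at h4
      exact Nat.le_of_mul_le_mul_right h4 (Nat.succ_pos d)
    obtain ⟨f, finj, hf⟩ := hall
    have hg : ∀ a : {a // a ∈ F.image s}, ∃ e ∈ F, s e = a.1 ∧ t e = f a := by
      intro a
      obtain ⟨e, he, het⟩ := Finset.mem_image.1 (hf a)
      rw [Finset.mem_filter] at he
      exact ⟨e, he.1, he.2, het⟩
    choose g hgF hgs hgt using hg
    set M : Finset E := Finset.univ.image g with hM
    have hMmem : ∀ e, e ∈ M ↔ ∃ a, g a = e := by simp [hM]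
    have hMF : M ⊆ F := by
      intro e he
      obtain ⟨a, rfl⟩ := (hMmem e).1 he
      exact hgF a
    have hMs : ∀ e ∈ M, ∀ e' ∈ M, s e = s e' → e = e' := by
      intro e he e' he' h
      obtain ⟨a, rfl⟩ := (hMmem e).1 he
      obtain ⟨a', rfl⟩ := (hMmem e').1 he'
      rw [hgs, hgs] at h
      rw [Subtype.ext h]
    have hMt : ∀ e ∈ M, ∀ e' ∈ M, t e = t e' → e = e' := by
      intro e he e' he' h
      obtain ⟨a, rfl⟩ := (hMmem e).1 he
      obtain ⟨a', rfl⟩ := (hMmem e').1 he'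
      rw [hgt, hgt] at h
      rw [finj h]
    have hMs' : ∀ e ∈ F, ∃ m ∈ M, s m = s e := by
      intro e he
      refine ⟨g ⟨s e, Finset.mem_image_of_mem s he⟩, (hMmem _).2 ⟨_, rfl⟩, hgs _⟩
    have hcards : (F.image s).card = (F.image t).card := by
      have h1 := card_fibers_aux F s (F.image s) (d + 1) hsA
      have h2 := card_fibers_aux F t (F.image t) (d + 1) htB
      rw [Finset.filter_true_of_mem (fun e he => Finset.mem_image_of_mem s he)] at h1
      rw [Finset.filter_true_of_mem (fun e he => Finset.mem_image_of_mem t he)] at h2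
      exact Nat.eq_of_mul_eq_mul_right (Nat.succ_pos d) (h1.symm.trans h2)
    have hMc : M.card = (F.image s).card := by
      rw [hM, Finset.card_image_of_injective]
      · simp
      · intro a a' h
        have := hgs a
        rw [h, hgs a'] at this
        exact Subtype.ext this.symm
    have hMt' : ∀ e ∈ F, ∃ m ∈ M, t m = t e := by
      intro e he
      have h1 : M.image t = F.image t := by
        apply Finset.eq_of_subset_of_card_le (Finset.image_subset_image hMF)
        rw [Finset.card_image_of_injOn (s := M) (fun a ha b hb h => hMt a ha b hb h), hMc, hcards]
      have h2 : t e ∈ M.image t := h1 ▸ Finset.mem_image_of_mem t he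
      exact Finset.mem_image.1 h2
    obtain ⟨c, hc, hcs, hct⟩ := ih (F \ M) (fiber_sdiff_aux F M s d hMF hMs hMs' hs)
      (fiber_sdiff_aux F M t d hMF hMt hMt' ht)
    refine ⟨fun e => if e ∈ M then d else c e, ?_, ?_, ?_⟩
    · intro e he
      by_cases h : e ∈ M
      · simp [h]
      · have := hc e (Finset.mem_sdiff.2 ⟨he, h⟩)
        simp only [h, if_false]
        omega
    all_goals
      intro e he e' he' h1 h2
      by_cases h : e ∈ M <;> by_cases h' : e' ∈ M
      · first | exact hMs e h e' h' h1 | exact hMt e h e' h' h1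
      · have := hc e' (Finset.mem_sdiff.2 ⟨he', h'⟩)
        simp only [h, h', if_true, if_false] at h2
        omega
      · have := hc e (Finset.mem_sdiff.2 ⟨he, h⟩)
        simp only [h, h', if_true, if_false] at h2
        omega
      · simp only [h, h', if_false] at h2
        first
        | exact hcs e (Finset.mem_sdiff.2 ⟨he, h⟩) e' (Finset.mem_sdiff.2 ⟨he', h'⟩) h1 h2
        | exact hct e (Finset.mem_sdiff.2 ⟨he, h⟩) e' (Finset.mem_sdiff.2 ⟨he', h'⟩) h1 h2

/-- Enumerate each fiber. -/
theorem enum_aux {E A : Type*} [DecidableEq E] [DecidableEq A] (F : Finset E) (s : E → A) :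
    ∃ φ : E → ℕ, (∀ e ∈ F, φ e < (F.filter (fun e' => s e' = s e)).card) ∧
      (∀ e ∈ F, ∀ k < (F.filter (fun e' => s e' = s e)).card, ∃ e' ∈ F, s e' = s e ∧ φ e' = k) ∧
      (∀ e ∈ F, ∀ e' ∈ F, s e = s e' → φ e = φ e' → e = e') := by
  classical
  let q : ∀ a, {e // e ∈ F.filter (fun e' => s e' = a)} ≃
    Fin (F.filter (fun e' => s e' = a)).card := fun a => (F.filter (fun e' => s e' = a)).equivFin
  let φ : E → ℕ := fun e => if h : e ∈ F.filter (fun e' => s e' = s e) then (q (s e) ⟨e, h⟩).1 else 0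
  have key : ∀ a e (h : e ∈ F.filter (fun e' => s e' = a)), φ e = (q a ⟨e, h⟩).1 := by
    intro a e h
    have h2 := (Finset.mem_filter.1 h).2
    subst h2
    simp only [φ]
    rw [dif_pos h]
  refine ⟨φ, ?_, ?_, ?_⟩
  · intro e he
    rw [key (s e) e (by simp [he])]
    exact (q (s e) _).2
  · intro e he k hk
    have h := ((q (s e)).symm ⟨k, hk⟩).2
    refine ⟨((q (s e)).symm ⟨k, hk⟩).1, (Finset.mem_filter.1 h).1, (Finset.mem_filter.1 h).2, ?_⟩
    rw [key (s e) _ h]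
    simp
  · intro e he e' he' h1 h2
    rw [key (s e) e (by simp [he]), key (s e) e' (by simp [he', h1])] at h2
    have := (q (s e)).injective (Fin.ext h2)
    exact congrArg Subtype.val this

theorem pair_aux {E A : Type*} [DecidableEq E] [DecidableEq A] (F : Finset E) (s : E → A)
    (hev : ∀ e ∈ F, Even (F.filter (fun e' => s e' = s e)).card) :
    ∃ φ : E → ℕ, (∀ e ∈ F, 2 * φ e < (F.filter (fun e' => s e' = s e)).card) ∧
      (∀ e ∈ F, (F.filter (fun e' => (s e', φ e') = (s e, φ e))).card = 2) := by
  obtain ⟨φ, h1, h2, h3⟩ := enum_aux F s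
  refine ⟨fun e => φ e / 2, ?_, ?_⟩
  · intro e he
    have := h1 e he
    simp only
    omega
  · intro e he
    have hlt := h1 e he
    obtain ⟨m, hm⟩ := hev e he
    obtain ⟨a, ha, has, hak⟩ := h2 e he (2 * (φ e / 2)) (by omega)
    obtain ⟨b, hb, hbs, hbk⟩ := h2 e he (2 * (φ e / 2) + 1) (by omega)
    rw [Finset.card_eq_two]
    refine ⟨a, b, ?_, ?_⟩
    · rintro rfl
      omega
    · ext x
      simp only [Finset.mem_filter, Finset.mem_insert, Finset.mem_singleton, Prod.mk.injEq]
      constructor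
      · rintro ⟨hx, hxs, hxk⟩
        rcases (show φ x = φ a ∨ φ x = φ b by omega) with h | h
        · exact Or.inl (h3 x hx a ha (hxs.trans has.symm) h)
        · exact Or.inr (h3 x hx b hb (hxs.trans hbs.symm) h)
      · rintro (rfl | rfl)
        · exact ⟨ha, has, by omega⟩
        · exact ⟨hb, hbs, by omega⟩

theorem half_aux {E A : Type*} [DecidableEq E] [DecidableEq A] (F : Finset E) (s : E → A)
    (φ h : E → ℕ) (v : A) (d : ℕ) (hd : (F.filter (fun e => s e = v)).card = 2 * d)
    (hφ : ∀ e ∈ F, 2 * φ e < (F.filter (fun e' => s e' = s e)).card)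
    (hinj : ∀ e ∈ F, ∀ e' ∈ F, (s e, φ e) = (s e', φ e') → h e = h e' → e = e')
    (h2 : ∀ e ∈ F, h e < 2) :
    ∀ j < 2, (F.filter (fun e => s e = v ∧ h e = j)).card = d := by
  have hle : ∀ j, (F.filter (fun e => s e = v ∧ h e = j)).card ≤ d := by
    intro j
    rw [← Finset.card_range d]
    apply Finset.card_le_card_of_injOn φ
    · intro e he
      simp only [Finset.coe_filter, Set.mem_ofPred_eq] at he
      have := hφ e he.1
      rw [he.2.1, hd] at this
      simp only [Finset.coe_range, Set.mem_Iio]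
      omega
    · intro e he e' he' hh
      simp only [Finset.coe_filter, Set.mem_ofPred_eq] at he he'
      exact hinj e he.1 e' he'.1 (by rw [he.2.1, he'.2.1, hh]) (by rw [he.2.2, he'.2.2])
  have hsum : (F.filter (fun e => s e = v)).card =
      (F.filter (fun e => s e = v ∧ h e = 0)).card +
      (F.filter (fun e => s e = v ∧ h e = 1)).card := by
    rw [← Finset.card_union_of_disjoint]
    · congr 1
      ext e
      simp only [Finset.mem_filter, Finset.mem_union]
      constructor
      · rintro ⟨he, hv⟩
        have := h2 e he
        rcases (show h e = 0 ∨ h e = 1 by omega) with h | h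
        · exact Or.inl ⟨he, hv, h⟩
        · exact Or.inr ⟨he, hv, h⟩
      · rintro (h | h)
        · exact ⟨h.1, h.2.1⟩
        · exact ⟨h.1, h.2.1⟩
    · rw [Finset.disjoint_left]
      intro e he he'
      simp only [Finset.mem_filter] at he he'
      omega
  intro j hj
  have h0 := hle 0
  have h1 := hle 1
  rcases (show j = 0 ∨ j = 1 by omega) with rfl | rfl <;> omega

/-- Surjectivity of an injective colouring on a full fiber. -/
theorem sur_aux {E A : Type*} [DecidableEq A] (F : Finset E) (s : E → A)
    (c : E → ℕ) (v : A) (d : ℕ) (hd : (F.filter (fun e => s e = v)).card = d)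
    (hc : ∀ e ∈ F, c e < d)
    (hinj : ∀ e ∈ F, ∀ e' ∈ F, s e = s e' → c e = c e' → e = e') :
    ∀ i < d, ∃ e ∈ F, s e = v ∧ c e = i := by
  intro i hi
  have h1 : (F.filter (fun e => s e = v)).image c = Finset.range d := by
    apply Finset.eq_of_subset_of_card_le
    · intro k hk
      obtain ⟨e, he, rfl⟩ := Finset.mem_image.1 hk
      exact Finset.mem_range.2 (hc e (Finset.mem_filter.1 he).1)
    · rw [Finset.card_image_of_injOn, hd, Finset.card_range]
      intro e he e' he' h
      simp only [Finset.coe_filter, Set.mem_ofPred_eq] at he he'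
      exact hinj e he.1 e' he'.1 (he.2.trans he'.2.symm) h
  have h2 : i ∈ (F.filter (fun e => s e = v)).image c := by
    rw [h1]; exact Finset.mem_range.2 hi
  obtain ⟨e, he, h⟩ := Finset.mem_image.1 h2
  rw [Finset.mem_filter] at he
  exact ⟨e, he.1, he.2, h⟩

/-- A fiber count in the auxiliary graph with one loop at each vertex of `X`. -/
theorem loop_card_aux {E V : Type*} [DecidableEq E] [DecidableEq V] (F : Finset E)
    (p q : E → V) (X : Finset V) (h : E → ℕ) (j k : ℕ) (hjk : j ≠ k) (r : ℕ) (hr : 1 ≤ r)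
    (hh : ∀ e ∈ F, h e = j ∨ h e = k)
    (hp : ∀ e ∈ F, p e ∈ X) (hq : ∀ e ∈ F, q e ∉ X)
    (hX : ∀ v ∈ X, (F.filter (fun e => p e = v ∧ h e = j)).card = r - 1)
    (hY : ∀ v, v ∉ X → (F.filter (fun e => q e = v ∧ h e = k)).card = r) (v : V) :
    ((F.disjSum X).filter
      (fun z => Sum.elim (fun e => if h e = j then p e else q e) id z = v)).card = r := by
  by_cases hv : v ∈ X
  · have : (F.disjSum X).filter
        (fun z => Sum.elim (fun e => if h e = j then p e else q e) id z = v) =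
        (F.filter (fun e => p e = v ∧ h e = j)).disjSum {v} := by
      ext z
      rcases z with e | w
      · simp only [Finset.mem_filter, Finset.inl_mem_disjSum, Sum.elim_inl]
        constructor
        · rintro ⟨he, h1⟩
          by_cases hj : h e = j
          · rw [if_pos hj] at h1
            exact ⟨he, h1, hj⟩
          · rw [if_neg hj] at h1
            exact absurd (h1 ▸ hv) (hq e he)
        · rintro ⟨he, h1, hj⟩
          exact ⟨he, by rw [if_pos hj, h1]⟩
      · simp only [Finset.mem_filter, Finset.inr_mem_disjSum, Sum.elim_inr, id,
          Finset.mem_singleton]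
        constructor
        · exact fun h => h.2
        · rintro rfl
          exact ⟨hv, rfl⟩
    rw [this, Finset.card_disjSum, hX v hv, Finset.card_singleton]
    omega
  · have : (F.disjSum X).filter
        (fun z => Sum.elim (fun e => if h e = j then p e else q e) id z = v) =
        (F.filter (fun e => q e = v ∧ h e = k)).disjSum ∅ := by
      ext z
      rcases z with e | w
      · simp only [Finset.mem_filter, Finset.inl_mem_disjSum, Sum.elim_inl]
        constructor
        · rintro ⟨he, h1⟩
          by_cases hj : h e = j
          · rw [if_pos hj] at h1
            exact absurd (h1 ▸ hp e he) hv
          · rw [if_neg hj] at h1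
            exact ⟨he, h1, (hh e he).resolve_left hj⟩
        · rintro ⟨he, h1, hj⟩
          exact ⟨he, by rw [if_neg (by omega), h1]⟩
      · simp only [Finset.mem_filter, Finset.inr_mem_disjSum, Sum.elim_inr, id,
          Finset.notMem_empty, iff_false]
        rintro ⟨h1, rfl⟩
        exact hv h1
    rw [this, Finset.card_disjSum, hY v hv, Finset.card_empty]
    rfl

/-- The decomposition of the graph. -/
theorem core_aux {E V : Type*} [DecidableEq E] [DecidableEq V] (F : Finset E)
    (p q : E → V) (X : Finset V) (r : ℕ) (hr : 1 ≤ r)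
    (hp : ∀ e ∈ F, p e ∈ X) (hq : ∀ e ∈ F, q e ∉ X)
    (hX : ∀ v ∈ X, (F.filter (fun e => p e = v)).card = 2 * (r - 1))
    (hY : ∀ v, v ∉ X → (F.filter (fun e => q e = v)).card = 2 * r) :
    ∃ (h c : E → ℕ) (m : V → ℕ), (∀ e ∈ F, h e < 2 ∧ c e < r) ∧
      (∀ e ∈ F, ∀ e' ∈ F, p e = p e' → h e = h e' → c e = c e' → e = e') ∧
      (∀ e ∈ F, ∀ e' ∈ F, q e = q e' → h e = h e' → c e = c e' → e = e') ∧
      (∀ v ∈ X, m v < r) ∧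
      (∀ e ∈ F, c e ≠ m (p e)) ∧
      (∀ v ∈ X, ∀ j < 2, ∀ i < r, i ≠ m v → ∃ e ∈ F, p e = v ∧ h e = j ∧ c e = i) ∧
      (∀ v, v ∉ X → ∀ j < 2, ∀ i < r, ∃ e ∈ F, q e = v ∧ h e = j ∧ c e = i) := by
  obtain ⟨φ, hφ, hφ2⟩ := pair_aux F p (fun e he => by rw [hX _ (hp e he)]; exact even_two_mul _)
  obtain ⟨ψ, hψ, hψ2⟩ := pair_aux F q (fun e he => by rw [hY _ (hq e he)]; exact even_two_mul _)
  obtain ⟨h, h2, hps, hqs⟩ := konig_aux (fun e => (p e, φ e)) (fun e => (q e, ψ e)) 2 F hφ2 hψ2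
  have hXh : ∀ v ∈ X, ∀ j < 2, (F.filter (fun e => p e = v ∧ h e = j)).card = r - 1 :=
    fun v hv => half_aux F p φ h v (r - 1) (hX v hv) hφ hps h2
  have hYh : ∀ v, v ∉ X → ∀ j < 2, (F.filter (fun e => q e = v ∧ h e = j)).card = r :=
    fun v hv => half_aux F q ψ h v r (hY v hv) hψ hqs h2
  have hh : ∀ e ∈ F, h e = 0 ∨ h e = 1 := fun e he => by have := h2 e he; omega
  have hs := loop_card_aux F p q X h 0 1 (by omega) r hr hh hp hq
    (fun v hv => hXh v hv 0 (by omega)) (fun v hv => hYh v hv 1 (by omega))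
  have ht := loop_card_aux F p q X h 1 0 (by omega) r hr (fun e he => (hh e he).symm) hp hq
    (fun v hv => hXh v hv 1 (by omega)) (fun v hv => hYh v hv 0 (by omega))
  obtain ⟨C, hC, hCs, hCt⟩ := konig_aux _ _ r (F.disjSum X) (fun z _ => hs _) (fun z _ => ht _)
  have hsurs := fun v => sur_aux _ _ C v r (hs v) hC hCs
  have hsurt := fun v => sur_aux _ _ C v r (ht v) hC hCt
  have memE : ∀ e ∈ F, (Sum.inl e : E ⊕ V) ∈ F.disjSum X := fun e he => by simpa using he
  have memV : ∀ v ∈ X, (Sum.inr v : E ⊕ V) ∈ F.disjSum X := fun e he => by simpa using he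
  refine ⟨h, fun e => C (Sum.inl e), fun v => C (Sum.inr v), ?_, ?_, ?_, ?_, ?_, ?_, ?_⟩
  · exact fun e he => ⟨h2 e he, hC _ (memE e he)⟩
  · intro e he e' he' h1 h2 h3
    apply Sum.inl_injective (β := V)
    rcases hh e he with h0 | h0
    · exact hCs _ (memE e he) _ (memE e' he') (by simp [← h2, h0, h1]) h3
    · exact hCt _ (memE e he) _ (memE e' he') (by simp [← h2, h0, h1]) h3
  · intro e he e' he' h1 h2 h3
    apply Sum.inl_injective (β := V)
    rcases hh e he with h0 | h0
    · exact hCt _ (memE e he) _ (memE e' he') (by simp [← h2, h0, h1]) h3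
    · exact hCs _ (memE e he) _ (memE e' he') (by simp [← h2, h0, h1]) h3
  · exact fun v hv => hC _ (memV v hv)
  · intro e he h3
    have : (Sum.inl e : E ⊕ V) = Sum.inr (p e) := by
      rcases hh e he with h0 | h0
      · exact hCs _ (memE e he) _ (memV _ (hp e he)) (by simp [h0]) h3
      · exact hCt _ (memE e he) _ (memV _ (hp e he)) (by simp [h0]) h3
    simp at this
  · intro v hv j hj i hi him
    rcases (show j = 0 ∨ j = 1 by omega) with rfl | rfl
    · obtain ⟨z, hz, hzv, hzi⟩ := hsurs v i hi
      rcases z with e | w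
      · have he : e ∈ F := by simpa using hz
        rcases hh e he with h0 | h0
        · exact ⟨e, he, by simpa [h0] using hzv, h0, hzi⟩
        · have : q e = v := by simpa [h0] using hzv
          exact absurd (this ▸ hv) (hq e he)
      · have : w = v := by simpa using hzv
        subst this
        exact absurd hzi.symm him
    · obtain ⟨z, hz, hzv, hzi⟩ := hsurt v i hi
      rcases z with e | w
      · have he : e ∈ F := by simpa using hz
        rcases hh e he with h0 | h0
        · have : q e = v := by simpa [h0] using hzv
          exact absurd (this ▸ hv) (hq e he)
        · exact ⟨e, he, by simpa [h0] using hzv, h0, hzi⟩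
      · have : w = v := by simpa using hzv
        subst this
        exact absurd hzi.symm him
  · intro v hv j hj i hi
    rcases (show j = 0 ∨ j = 1 by omega) with rfl | rfl
    · obtain ⟨z, hz, hzv, hzi⟩ := hsurt v i hi
      rcases z with e | w
      · have he : e ∈ F := by simpa using hz
        rcases hh e he with h0 | h0
        · exact ⟨e, he, by simpa [h0] using hzv, h0, hzi⟩
        · have : p e = v := by simpa [h0] using hzv
          exact absurd (this ▸ hp e he) hv
      · have : w = v := by simpa using hzv
        subst this
        exact absurd (by simpa using hz) hv
    · obtain ⟨z, hz, hzv, hzi⟩ := hsurs v i hi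
      rcases z with e | w
      · have he : e ∈ F := by simpa using hz
        rcases hh e he with h0 | h0
        · have : p e = v := by simpa [h0] using hzv
          exact absurd (this ▸ hp e he) hv
        · exact ⟨e, he, by simpa [h0] using hzv, h0, hzi⟩
      · have : w = v := by simpa using hzv
        subst this
        exact absurd (by simpa using hz) hv

theorem exists_coloring_aux {V : Type*} [Fintype V] (G : SimpleGraph V) [DecidableRel G.Adj]
    (r : ℕ) (hr : 2 ≤ r) (hbireg : IsBiregular G (2 * r - 2) (2 * r)) :
    ∃ c : Sym2 V → ℕ, IsCyclicIntervalColoring G (2 * r) c := by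
  classical
  obtain ⟨X, ⟨x0, _⟩, _, hadj, hdX, hdY⟩ := hbireg
  have hpq : ∀ e : Sym2 V, ∃ x y : V, e ∈ G.edgeSet → e = s(x, y) ∧ x ∈ X ∧ y ∉ X := by
    intro e
    induction e using Sym2.ind with
    | _ a b =>
      by_cases ha : a ∈ X
      · exact ⟨a, b, fun h => ⟨rfl, ha, (hadj a b h).1 ha⟩⟩
      · refine ⟨b, a, fun h => ⟨Sym2.eq_swap, ?_, ha⟩⟩
        have := hadj a b h
        tauto
  choose p q hpq using hpq
  have hpm : ∀ v ∈ X, ∀ e ∈ G.edgeSet, v ∈ e ↔ p e = v := by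
    intro v hv e he
    obtain ⟨h1, h2, h3⟩ := hpq e he
    generalize p e = x at *
    generalize q e = y at *
    subst h1
    rw [Sym2.mem_iff]
    constructor
    · rintro (rfl | rfl)
      · rfl
      · exact absurd hv h3
    · exact fun h => Or.inl h.symm
  have hqm : ∀ v, v ∉ X → ∀ e ∈ G.edgeSet, v ∈ e ↔ q e = v := by
    intro v hv e he
    obtain ⟨h1, h2, h3⟩ := hpq e he
    generalize p e = x at *
    generalize q e = y at *
    subst h1
    rw [Sym2.mem_iff]
    constructor
    · rintro (rfl | rfl)
      · exact absurd h2 hv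
      · rfl
    · exact fun h => Or.inr h.symm
  have hcard : ∀ (f : Sym2 V → V) (v : V), (∀ e ∈ G.edgeSet, v ∈ e ↔ f e = v) →
      (G.edgeFinset.filter (fun e => f e = v)).card = G.degree v := by
    intro f v hf
    rw [← G.card_incidenceFinset_eq_degree v]
    congr 1
    ext e
    rw [Finset.mem_filter, SimpleGraph.mem_edgeFinset, SimpleGraph.mem_incidenceFinset]
    constructor
    · exact fun h => ⟨h.1, (hf e h.1).2 h.2⟩
    · exact fun h => ⟨h.1, (hf e h.1).1 h.2⟩
  obtain ⟨h, c, m, hlt, hinjp, hinjq, hm, hcm, hsX, hsY⟩ :=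
    core_aux G.edgeFinset p q X.toFinset r (by omega)
      (fun e he => by simpa using (hpq e (by simpa using he)).2.1)
      (fun e he => by simpa using (hpq e (by simpa using he)).2.2)
      (fun v hv => by
        have hv : v ∈ X := by simpa using hv
        rw [hcard p v (hpm v hv), hdX v hv]
        omega)
      (fun v hv => by
        have hv : v ∉ X := by simpa using hv
        rw [hcard q v (hqm v hv), hdY v hv])
  simp only [SimpleGraph.mem_edgeFinset, Set.mem_toFinset] at hlt hinjp hinjq hm hcm hsX hsY
  refine ⟨fun e => 2 * c e + h e + 1, ⟨?_, ?_⟩, ?_⟩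
  · intro e he
    have := hlt e he
    simp only [Set.mem_Icc]
    omega
  · rintro e₁ h1 e₂ h2 hne ⟨v, hv1, hv2⟩ heq
    simp only at heq
    have a1 := hlt e₁ h1
    have a2 := hlt e₂ h2
    apply hne
    by_cases hv : v ∈ X
    · exact hinjp e₁ h1 e₂ h2 (((hpm v hv e₁ h1).1 hv1).trans ((hpm v hv e₂ h2).1 hv2).symm)
        (by omega) (by omega)
    · exact hinjq e₁ h1 e₂ h2 (((hqm v hv e₁ h1).1 hv1).trans ((hqm v hv e₂ h2).1 hv2).symm)
        (by omega) (by omega)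
  · intro v
    right
    by_cases hv : v ∈ X
    · refine ⟨2 * m v + 1, 2 * m v + 2, ?_⟩
      have hmv := hm v hv
      ext k
      simp only [Set.mem_diff, Set.mem_Icc, colorsAt, Set.mem_image]
      constructor
      · rintro ⟨hk, hn⟩
        by_contra hcon
        obtain ⟨e, he, hpe, hhe, hce⟩ := hsX v hv ((k - 1) % 2) (by omega) ((k - 1) / 2)
          (by omega) (by omega)
        exact hn ⟨e, ⟨he, (hpm v hv e he).2 hpe⟩, by omega⟩
      · intro hk
        refine ⟨by omega, ?_⟩
        rintro ⟨e, ⟨he, hve⟩, hek⟩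
        have h1 := hcm e he
        rw [(hpm v hv e he).1 hve] at h1
        have := hlt e he
        omega
    · refine ⟨1, 0, ?_⟩
      ext k
      simp only [Set.mem_diff, Set.mem_Icc, colorsAt, Set.mem_image]
      constructor
      · rintro ⟨hk, hn⟩
        exfalso
        obtain ⟨e, he, hpe, hhe, hce⟩ := hsY v hv ((k - 1) % 2) (by omega) ((k - 1) / 2)
          (by omega)
        exact hn ⟨e, ⟨he, (hqm v hv e he).2 hpe⟩, by omega⟩
      · intro hk
        omega

/-- every finite `(2r-2, 2r)`-biregular graph (`r ≥ 2`) has a cyclic interval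
`2r`-coloring, and the least `t` for which it has a cyclic interval `t`-coloring is `2r`. -/
theorem stmt_9 {V : Type*} [Fintype V] (G : SimpleGraph V) [DecidableRel G.Adj]
    (r : ℕ) (hr : 2 ≤ r) (hbireg : IsBiregular G (2 * r - 2) (2 * r)) :
    (∃ c : Sym2 V → ℕ, IsCyclicIntervalColoring G (2 * r) c) ∧
    IsLeast {t : ℕ | ∃ c : Sym2 V → ℕ, IsCyclicIntervalColoring G t c} (2 * r) := by
  classical
  have hex := exists_coloring_aux G r hr hbireg
  refine ⟨hex, hex, ?_⟩
  rintro t ⟨c, ⟨hc1, hc2⟩, _⟩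
  obtain ⟨X, _, ⟨y, hy⟩, _, _, hdY⟩ := hbireg
  rw [← hdY y hy, ← G.card_incidenceFinset_eq_degree y]
  have : (Finset.Icc 1 t).card = t := by simp
  rw [← this]
  apply Finset.card_le_card_of_injOn c
  · intro e he
    have he : e ∈ G.incidenceSet y := by simpa using he
    have := hc1 e he.1
    simpa using this
  · intro e he e' he' h
    have he : e ∈ G.incidenceSet y := by simpa using he
    have he' : e' ∈ G.incidenceSet y := by simpa using he'
    by_contra hne
    exact hc2 e he.1 e' he'.1 hne ⟨y, he.2, he'.2⟩ h
end

section
/- Every finite (3,5)-biregular graph G has a cyclic interval t-coloring for some t ≤ 6. -/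
open SimpleGraph

open Finset in
/-- König's theorem for regular bipartite multigraphs. -/
theorem konig_regular {E A B : Type*} [Fintype E] [Fintype A] [Fintype B] [DecidableEq E]
    [DecidableEq A] [DecidableEq B] (f : E → A) (g : E → B) (k : ℕ) :
    ∀ S : Finset E, (∀ a, #{e ∈ S | f e = a} = k) → (∀ b, #{e ∈ S | g e = b} = k) →
    ∃ c : E → ℕ, (∀ e ∈ S, c e < k) ∧
      ∀ e ∈ S, ∀ e' ∈ S, e ≠ e' → (f e = f e' ∨ g e = g e') → c e ≠ c e' := by
  induction k with
  | zero =>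
    intro S hf hg
    have hS : ∀ e, e ∉ S := by
      intro e he
      have h := hf (f e)
      rw [Finset.card_eq_zero] at h
      have : e ∈ ({e' ∈ S | f e' = f e} : Finset E) := by simp [he]
      rw [h] at this
      simp at this
    exact ⟨fun _ => 0, fun e he => absurd he (hS e), fun e he => absurd he (hS e)⟩
  | succ k ih =>
    intro S hf hg
    have hcA : #S = Fintype.card A * (k + 1) := by
      rw [Finset.card_eq_sum_card_fiberwise (f := f) (t := univ) (by simp)]
      simp [hf]
    have hcB : #S = Fintype.card B * (k + 1) := by
      rw [Finset.card_eq_sum_card_fiberwise (f := g) (t := univ) (by simp)]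
      simp [hg]
    have hAB : Fintype.card A = Fintype.card B :=
      Nat.eq_of_mul_eq_mul_right (Nat.succ_pos k) (hcA.symm.trans hcB)
    let t : A → Finset B := fun a => image g {e ∈ S | f e = a}
    have hall : ∀ s : Finset A, #s ≤ #(s.biUnion t) := by
      intro s
      have h1 : #{e ∈ S | f e ∈ s} = #s * (k + 1) := by
        rw [Finset.card_eq_sum_card_fiberwise (f := f) (t := s) (by intro e; simp)]
        rw [Finset.sum_congr rfl (g := fun _ => k + 1)]
        · simp
        · intro a ha
          rw [← hf a]
          congr 1
          ext e
          simp only [mem_filter]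
          constructor
          · rintro ⟨⟨h, -⟩, h'⟩; exact ⟨h, h'⟩
          · rintro ⟨h, h'⟩; exact ⟨⟨h, h' ▸ ha⟩, h'⟩
      have h2 : #{e ∈ S | g e ∈ s.biUnion t} = #(s.biUnion t) * (k + 1) := by
        rw [Finset.card_eq_sum_card_fiberwise (f := g) (t := s.biUnion t)
          (by intro e he; exact (mem_filter.1 he).2)]
        rw [Finset.sum_congr rfl (g := fun _ => k + 1)]
        · simp
        · intro a ha
          rw [← hg a]
          congr 1
          ext e
          simp only [mem_filter]
          constructor
          · rintro ⟨⟨h, -⟩, h'⟩; exact ⟨h, h'⟩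
          · rintro ⟨h, h'⟩; exact ⟨⟨h, h' ▸ ha⟩, h'⟩
      have h3 : #{e ∈ S | f e ∈ s} ≤ #{e ∈ S | g e ∈ s.biUnion t} := by
        apply card_le_card
        intro e he
        simp only [mem_filter] at he
        simp only [mem_filter, mem_biUnion]
        refine ⟨he.1, f e, he.2, ?_⟩
        exact mem_image_of_mem _ (by simp [he.1])
      rw [h1, h2] at h3
      exact Nat.le_of_mul_le_mul_right h3 (Nat.succ_pos k)
    obtain ⟨m, hm, hmt⟩ := (Finset.all_card_le_biUnion_card_iff_exists_injective t).1 hall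
    have hmb : Function.Bijective m := (Fintype.bijective_iff_injective_and_card m).2 ⟨hm, hAB⟩
    have : ∀ a, ∃ e, e ∈ S ∧ f e = a ∧ g e = m a := by
      intro a
      have := hmt a
      simp only [t, mem_image, mem_filter] at this
      obtain ⟨e, ⟨h1, h2⟩, h3⟩ := this
      exact ⟨e, h1, h2, h3⟩
    choose h hS hfh hgh using this
    obtain ⟨c, hc1, hc2⟩ := ih (S \ univ.image h) (by
      intro a
      have : ({e ∈ S \ univ.image h | f e = a} : Finset E) = ({e ∈ S | f e = a} : Finset E).erase (h a) := by
        ext e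
        simp only [mem_filter, mem_sdiff, mem_image, mem_univ, true_and, mem_erase]
        constructor
        · rintro ⟨⟨h1, h2⟩, h3⟩
          exact ⟨fun h4 => h2 ⟨a, h4.symm⟩, h1, h3⟩
        · rintro ⟨h1, h2, h3⟩
          refine ⟨⟨h2, ?_⟩, h3⟩
          rintro ⟨a', rfl⟩
          rw [hfh] at h3
          exact h1 (by rw [h3])
      rw [this, card_erase_of_mem (by simp [hS, hfh]), hf]
      simp) (by
      intro b
      obtain ⟨a, rfl⟩ := hmb.2 b
      have : ({e ∈ S \ univ.image h | g e = m a} : Finset E) = ({e ∈ S | g e = m a} : Finset E).erase (h a) := by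
        ext e
        simp only [mem_filter, mem_sdiff, mem_image, mem_univ, true_and, mem_erase]
        constructor
        · rintro ⟨⟨h1, h2⟩, h3⟩
          exact ⟨fun h4 => h2 ⟨a, h4.symm⟩, h1, h3⟩
        · rintro ⟨h1, h2, h3⟩
          refine ⟨⟨h2, ?_⟩, h3⟩
          rintro ⟨a', rfl⟩
          rw [hgh] at h3
          exact h1 (by rw [hm h3])
      rw [this, card_erase_of_mem (by simp [hS, hgh]), hg]
      simp)
    refine ⟨fun e => if e ∈ univ.image h then k else c e, ?_, ?_⟩
    · intro e he
      by_cases h' : e ∈ univ.image h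
      · simp only [h', if_true]; omega
      · simp only [h', if_false]
        have := hc1 e (mem_sdiff.2 ⟨he, h'⟩)
        omega
    · intro e he e' he' hne hor
      by_cases h1 : e ∈ univ.image h <;> by_cases h2 : e' ∈ univ.image h
      · exfalso
        simp only [mem_image, mem_univ, true_and] at h1 h2
        obtain ⟨a, rfl⟩ := h1
        obtain ⟨a', rfl⟩ := h2
        rw [hfh, hfh, hgh, hgh] at hor
        rcases hor with hor | hor
        · exact hne (by rw [hor])
        · exact hne (by rw [hm hor])
      · simp only [h1, h2, if_true, if_false]
        have := hc1 e' (mem_sdiff.2 ⟨he', h2⟩)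
        omega
      · simp only [h1, h2, if_true, if_false]
        have := hc1 e (mem_sdiff.2 ⟨he, h1⟩)
        omega
      · simp only [h1, h2, if_false]
        exact hc2 e (mem_sdiff.2 ⟨he, h1⟩) e' (mem_sdiff.2 ⟨he', h2⟩) hne hor

open Finset in
/-- König's theorem for bipartite multigraphs of maximum degree at most `k`. -/
theorem konig {E A B : Type*} [Fintype E] [Fintype A] [Fintype B] [DecidableEq E]
    [DecidableEq A] [DecidableEq B] (f : E → A) (g : E → B) (k : ℕ)
    (hf : ∀ a, #{e | f e = a} ≤ k) (hg : ∀ b, #{e | g e = b} ≤ k) :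
    ∃ c : E → ℕ, (∀ e, c e < k) ∧
      ∀ e e', e ≠ e' → (f e = f e' ∨ g e = g e') → c e ≠ c e' := by
  let P := Σ a : A, Fin (k - #{e | f e = a})
  let Q := Σ b : B, Fin (k - #{e | g e = b})
  let F : (E ⊕ E) ⊕ (P ⊕ Q) → A ⊕ B := Sum.elim (Sum.elim (fun e => Sum.inl (f e)) (fun e => Sum.inr (g e)))
    (Sum.elim (fun p => Sum.inl p.1) (fun q => Sum.inr q.1))
  let H : (E ⊕ E) ⊕ (P ⊕ Q) → A ⊕ B := Sum.elim (Sum.elim (fun e => Sum.inr (g e)) (fun e => Sum.inl (f e)))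
    (Sum.elim (fun p => Sum.inl p.1) (fun q => Sum.inr q.1))
  have hP : ∀ a, (∑ p : P, if p.1 = a then 1 else 0) = k - #{e | f e = a} := by
    intro a
    rw [Fintype.sum_sigma, Finset.sum_eq_single a]
    · simp
    · intro b _ hb
      simp [hb]
    · simp
  have hQ : ∀ b, (∑ p : Q, if p.1 = b then 1 else 0) = k - #{e | g e = b} := by
    intro a
    rw [Fintype.sum_sigma, Finset.sum_eq_single a]
    · simp
    · intro b _ hb
      simp [hb]
    · simp
  obtain ⟨c, hc1, hc2⟩ := konig_regular F H k univ (by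
    rintro (a | b)
    · rw [card_filter]
      simp only [Fintype.sum_sum_type, F, Sum.elim_inl, Sum.elim_inr, Sum.inl.injEq, reduceCtorEq, if_false]
      rw [hP, ← card_filter]
      have := hf a
      simp
      omega
    · rw [card_filter]
      simp only [Fintype.sum_sum_type, F, Sum.elim_inl, Sum.elim_inr, Sum.inr.injEq, reduceCtorEq, if_false]
      rw [hQ, ← card_filter]
      have := hg b
      simp
      omega) (by
    rintro (a | b)
    · rw [card_filter]
      simp only [Fintype.sum_sum_type, H, Sum.elim_inl, Sum.elim_inr, Sum.inl.injEq, reduceCtorEq, if_false]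
      rw [hP, ← card_filter]
      have := hf a
      simp
      omega
    · rw [card_filter]
      simp only [Fintype.sum_sum_type, H, Sum.elim_inl, Sum.elim_inr, Sum.inr.injEq, reduceCtorEq, if_false]
      rw [hQ, ← card_filter]
      have := hg b
      simp
      omega)
  refine ⟨fun e => c (Sum.inl (Sum.inl e)), fun e => hc1 _ (mem_univ _), ?_⟩
  intro e e' hne hor
  apply hc2 _ (mem_univ _) _ (mem_univ _)
  · simpa using hne
  · simpa [F, H] using hor

/-- The final color determined by a class in `{0,1,2}` and a bit in `{0,1}`. -/
def finalColor (i b : ℕ) : ℕ :=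
  if i = 0 then (if b = 0 then 1 else 4)
  else if i = 1 then (if b = 0 then 5 else 2)
  else (if b = 0 then 3 else 6)

theorem finalColor_ne {i j b d : ℕ} (hi : i < 3) (hj : j < 3) (hb : b < 2) (hd : d < 2)
    (h : i ≠ j ∨ b ≠ d) : finalColor i b ≠ finalColor j d := by
  unfold finalColor
  interval_cases i <;> interval_cases j <;> interval_cases b <;> interval_cases d <;> simp_all

theorem finalColor_mem {i b : ℕ} : finalColor i b ∈ Set.Icc 1 6 := by
  unfold finalColor
  split_ifs <;> simp

theorem finalColor_interval {b₀ b₁ b₂ : ℕ} (h0 : b₀ < 2) (h1 : b₁ < 2) (h2 : b₂ < 2)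
    (h : b₀ ≠ b₁) :
    IsIntervalSet {finalColor 0 b₀, finalColor 1 b₁, finalColor 2 b₂} ∨
    IsIntervalSet (Set.Icc 1 6 \ {finalColor 0 b₀, finalColor 1 b₁, finalColor 2 b₂}) := by
  unfold finalColor IsIntervalSet
  interval_cases b₀ <;> interval_cases b₁ <;> interval_cases b₂ <;> simp at h ⊢
  · left; exact ⟨1, 3, by ext x; simp; omega⟩
  · right; exact ⟨3, 5, by ext x; simp; omega⟩
  · left; exact ⟨3, 5, by ext x; simp; omega⟩
  · left; exact ⟨4, 6, by ext x; simp; omega⟩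

open Finset in
/-- Abstract form of the coloring: edges `E`, endpoint maps `f`, `g`. -/
theorem abstract_coloring {E A B : Type*} [Fintype E] [Fintype A] [Fintype B] [DecidableEq E]
    [DecidableEq A] [DecidableEq B] (f : E → A) (g : E → B)
    (hf : ∀ a, #{e | f e = a} ≤ 3) (hg : ∀ b, #{e | g e = b} ≤ 6) :
    ∃ c d : E → ℕ, (∀ e, c e < 3) ∧ (∀ e, d e < 2) ∧
      (∀ e e', e ≠ e' → f e = f e' → c e ≠ c e') ∧
      (∀ e e', e ≠ e' → f e = f e' → c e ≠ 2 → c e' ≠ 2 → d e ≠ d e') ∧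
      (∀ e e', e ≠ e' → g e = g e' → c e = c e' → d e ≠ d e') := by
  have hT : ∀ b, ∃ T : Finset E, T ⊆ ({e | g e = b} : Finset E) ∧ #T ≤ 3 ∧
      #(({e | g e = b} : Finset E) \ T) ≤ 3 := by
    intro b
    obtain ⟨T, h1, h2⟩ := Finset.exists_subset_card_eq
      (s := ({e | g e = b} : Finset E)) (n := min 3 #{e | g e = b}) (min_le_right _ _)
    refine ⟨T, h1, by omega, ?_⟩
    rw [card_sdiff_of_subset h1]
    have := hg b
    omega
  choose T hTs hT1 hT2 using hT
  obtain ⟨c, hc, hc'⟩ := konig f (fun e => (g e, decide (e ∈ T (g e)))) 3 hf (by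
    rintro ⟨b, _ | _⟩
    · refine le_trans (card_le_card ?_) (hT2 b)
      intro e
      simp only [mem_filter, mem_univ, true_and, Prod.mk.injEq, decide_eq_false_iff_not, mem_sdiff]
      rintro ⟨rfl, h⟩
      exact ⟨rfl, h⟩
    · refine le_trans (card_le_card ?_) (hT1 b)
      intro e
      simp only [mem_filter, mem_univ, true_and, Prod.mk.injEq, decide_eq_true_eq]
      rintro ⟨rfl, h⟩
      exact h)
  obtain ⟨d, hd, hd'⟩ := konig (fun e => (f e, decide (c e = 2)))
    (fun e => (g e, (⟨c e, hc e⟩ : Fin 3))) 2 (by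
      rintro ⟨a, b⟩
      rw [show (2 : ℕ) = #(range 2) by simp]
      cases b
      · apply card_le_card_of_injOn c
        · intro e he
          simp at he
          have := hc e
          simp; omega
        · intro e he e' he' heq
          simp at he he'
          by_contra hne
          exact hc' e e' hne (Or.inl (he.1.trans he'.1.symm)) heq
      · refine le_trans (card_le_one.2 ?_) (by simp)
        intro e he e' he'
        simp at he he'
        by_contra hne
        exact hc' e e' hne (Or.inl (he.1.trans he'.1.symm)) (he.2.trans he'.2.symm)) (by
      rintro ⟨b, i⟩
      rw [show (2 : ℕ) = #(univ : Finset Bool) by simp]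
      apply card_le_card_of_injOn (fun e => decide (e ∈ T (g e)))
        (fun _ _ => Finset.mem_coe.2 (Finset.mem_univ _))
      intro e he e' he' heq
      simp only [coe_filter, mem_univ, true_and, Set.mem_setOf_eq, Prod.mk.injEq] at he he'
      by_contra hne
      refine hc' e e' hne (Or.inr (Prod.ext (he.1.trans he'.1.symm) heq)) ?_
      exact congrArg Fin.val (he.2.trans he'.2.symm))
  refine ⟨c, d, hc, hd, fun e e' hne h => hc' e e' hne (Or.inl h), ?_, ?_⟩
  · intro e e' hne h h1 h2
    exact hd' e e' hne (Or.inl (by simp [h, h1, h2]))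
  · intro e e' hne h h1
    exact hd' e e' hne (Or.inr (by simp [h, h1]))

/-- every finite `(3,5)`-biregular graph has a cyclic interval `t`-coloring
for some `t ≤ 6`. -/
theorem stmt_11 {V : Type*} [Fintype V] (G : SimpleGraph V) [DecidableRel G.Adj]
    (hbireg : IsBiregular G 3 5) :
    ∃ t : ℕ, t ≤ 6 ∧ ∃ c : Sym2 V → ℕ, IsCyclicIntervalColoring G t c := by
  classical
  obtain ⟨X, -, -, hX, h3, h5⟩ := hbireg
  have hend : ∀ e : G.edgeSet, ∃ p : V × V, p.1 ∈ X ∧ p.2 ∉ X ∧ (e : Sym2 V) = s(p.1, p.2) := by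
    rintro ⟨e, he⟩
    induction e using Sym2.ind with
    | _ u v =>
      have hadj : G.Adj u v := he
      by_cases hu : u ∈ X
      · exact ⟨(u, v), hu, (hX u v hadj).1 hu, rfl⟩
      · refine ⟨(v, u), ?_, hu, Sym2.eq_swap⟩
        by_contra hv
        exact hu ((hX u v hadj).2 hv)
  choose p hp1 hp2 hp using hend
  have memf : ∀ (e : G.edgeSet) (v : V), v ∈ X → (v ∈ (e : Sym2 V) ↔ (p e).1 = v) := by
    intro e v hv
    rw [hp e, Sym2.mem_iff]
    constructor
    · rintro (h | h)
      · exact h.symm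
      · exact absurd (h ▸ hv) (hp2 e)
    · intro h; exact Or.inl h.symm
  have memg : ∀ (e : G.edgeSet) (v : V), v ∉ X → (v ∈ (e : Sym2 V) ↔ (p e).2 = v) := by
    intro e v hv
    rw [hp e, Sym2.mem_iff]
    constructor
    · rintro (h | h)
      · exact absurd (hp1 e) (h ▸ hv)
      · exact h.symm
    · intro h; exact Or.inr h.symm
  have hcard : ∀ v : V, (Finset.univ.filter (fun e : G.edgeSet => v ∈ (e : Sym2 V))).card
      = G.degree v := by
    intro v
    rw [← G.card_incidenceFinset_eq_degree v]
    rw [← Finset.card_map (Function.Embedding.subtype _)]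
    congr 1
    ext e
    simp [SimpleGraph.mem_incidenceFinset, SimpleGraph.incidenceSet]
    try tauto
  have hcf : ∀ v ∈ X, (Finset.univ.filter (fun e : G.edgeSet => (p e).1 = v)).card = 3 := by
    intro v hv
    rw [← h3 v hv, ← hcard v]
    congr 1
    ext e
    simp [memf e v hv]
  have hcg : ∀ v ∉ X, (Finset.univ.filter (fun e : G.edgeSet => (p e).2 = v)).card = 5 := by
    intro v hv
    rw [← h5 v hv, ← hcard v]
    congr 1
    ext e
    simp [memg e v hv]
  obtain ⟨c, d, hc, hd, hcd1, hcd2, hcd3⟩ := abstract_coloring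
    (fun e : G.edgeSet => (p e).1) (fun e : G.edgeSet => (p e).2) (by
      intro v
      by_cases hv : v ∈ X
      · exact (hcf v hv).le
      · rw [Finset.filter_false_of_mem]
        · simp
        · rintro e - rfl
          exact hv (hp1 e)) (by
      intro v
      by_cases hv : v ∈ X
      · rw [Finset.filter_false_of_mem]
        · simp
        · rintro e - rfl
          exact hp2 e hv
      · rw [hcg v hv]; norm_num)
  let φ : G.edgeSet → ℕ := fun e => finalColor (c e) (d e)
  have hφ : ∀ e e' : G.edgeSet, e ≠ e' → (∃ v, v ∈ (e : Sym2 V) ∧ v ∈ (e' : Sym2 V)) →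
      φ e ≠ φ e' := by
    rintro e e' hne ⟨v, hv, hv'⟩
    apply finalColor_ne (hc _) (hc _) (hd _) (hd _)
    by_cases hvX : v ∈ X
    · left
      rw [memf _ _ hvX] at hv hv'
      exact hcd1 e e' hne (hv.trans hv'.symm)
    · rw [memg _ _ hvX] at hv hv'
      by_cases h : c e = c e'
      · right; exact hcd3 e e' hne (hv.trans hv'.symm) h
      · left; exact h
  let C : Sym2 V → ℕ := fun e => if h : e ∈ G.edgeSet then φ ⟨e, h⟩ else 0
  have hC : ∀ e : G.edgeSet, C e = φ e := by
    intro e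
    simp [C]
  have hcol : ∀ v, colorsAt G C v = φ '' {e : G.edgeSet | v ∈ (e : Sym2 V)} := by
    intro v
    ext n
    simp only [colorsAt, Set.mem_image, Set.mem_setOf_eq]
    constructor
    · rintro ⟨e, he, rfl⟩
      exact ⟨⟨e, he.1⟩, he.2, (hC ⟨e, he.1⟩).symm⟩
    · rintro ⟨e, he, rfl⟩
      exact ⟨e, ⟨e.2, he⟩, hC e⟩
  refine ⟨6, le_rfl, C, ⟨?_, ?_⟩, ?_⟩
  · intro e he
    rw [hC ⟨e, he⟩]
    exact finalColor_mem
  · intro e₁ h₁ e₂ h₂ hne hv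
    rw [hC ⟨e₁, h₁⟩, hC ⟨e₂, h₂⟩]
    exact hφ _ _ (by simpa using hne) hv
  · intro v
    rw [hcol]
    by_cases hv : v ∈ X
    · have himg : (Finset.univ.filter (fun e : G.edgeSet => (p e).1 = v)).image c
          = Finset.range 3 := by
        apply Finset.eq_of_subset_of_card_le
        · intro n hn
          obtain ⟨e, -, rfl⟩ := Finset.mem_image.1 hn
          exact Finset.mem_range.2 (hc e)
        · rw [Finset.card_image_of_injOn, hcf v hv]
          · simp
          · intro e he e' he' heq
            simp at he he'
            by_contra hne
            exact hcd1 e e' hne (he.trans he'.symm) heq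
      have hex : ∀ i < 3, ∃ e : G.edgeSet, (p e).1 = v ∧ c e = i := by
        intro i hi
        have : i ∈ Finset.range 3 := Finset.mem_range.2 hi
        rw [← himg] at this
        obtain ⟨e, he, h⟩ := Finset.mem_image.1 this
        exact ⟨e, (Finset.mem_filter.1 he).2, h⟩
      obtain ⟨e0, hv0, hc0⟩ := hex 0 (by norm_num)
      obtain ⟨e1, hv1, hc1⟩ := hex 1 (by norm_num)
      obtain ⟨e2, hv2, hc2⟩ := hex 2 (by norm_num)
      have hset : φ '' {e : G.edgeSet | v ∈ (e : Sym2 V)} =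
          {finalColor 0 (d e0), finalColor 1 (d e1), finalColor 2 (d e2)} := by
        have : {e : G.edgeSet | v ∈ (e : Sym2 V)} = {e0, e1, e2} := by
          ext e
          simp only [Set.mem_setOf_eq, memf e v hv, Set.mem_insert_iff, Set.mem_singleton_iff]
          constructor
          · intro he
            have huniq : ∀ e', (p e').1 = v → c e = c e' → e = e' := by
              intro e' he' h
              by_contra hne
              exact hcd1 e e' hne (he.trans he'.symm) h
            have := hc e
            have h012 : c e = 0 ∨ c e = 1 ∨ c e = 2 := by omega
            rcases h012 with h | h | h
            · exact Or.inl (huniq _ hv0 (h.trans hc0.symm))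
            · exact Or.inr (Or.inl (huniq _ hv1 (h.trans hc1.symm)))
            · exact Or.inr (Or.inr (huniq _ hv2 (h.trans hc2.symm)))
          · rintro (rfl | rfl | rfl) <;> assumption
        rw [this, Set.image_insert_eq, Set.image_pair]
        simp only [φ, hc0, hc1, hc2]
      rw [hset]
      apply finalColor_interval (hd _) (hd _) (hd _)
      apply hcd2 e0 e1 _ (hv0.trans hv1.symm) (by omega) (by omega)
      rintro rfl
      omega
    · right
      let T := (Finset.univ.filter (fun e : G.edgeSet => v ∈ (e : Sym2 V))).image φ
      have hT : T.card = 5 := by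
        rw [Finset.card_image_of_injOn, hcard v, h5 v hv]
        intro e he e' he' heq
        simp at he he'
        by_contra hne
        exact hφ e e' hne ⟨v, he, he'⟩ heq
      have hsub : T ⊆ Finset.Icc 1 6 := by
        intro n hn
        obtain ⟨e, -, rfl⟩ := Finset.mem_image.1 hn
        exact Finset.mem_Icc.2 finalColor_mem
      have h1 : (Finset.Icc 1 6 \ T).card = 1 := by
        rw [Finset.card_sdiff_of_subset hsub, hT]
        simp
      obtain ⟨a, ha⟩ := Finset.card_eq_one.1 h1
      refine ⟨a, a, ?_⟩
      have hTs : φ '' {e : G.edgeSet | v ∈ (e : Sym2 V)} = (T : Set ℕ) := by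
        simp [T]
      rw [hTs, ← Finset.coe_Icc, ← Finset.coe_sdiff, ha]
      simp
end
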